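/- arXiv:2405.02272 — 2 statements merged into one kernel-verified Lean document; each statement's English description precedes it below -/
import Mathlib

section
/- For every integer j ≥ 0, the strong cone Morse inequality holds: Σ_{k=0}^{j} (−1)^{j−k} b^φ_k ≤ Σ_{k=0}^{j} (−1)^{j−k} (m_k − v_{k−ℓ} + m_{k−ℓ+1} − v_{k−ℓ+1}). -/
open LinearMap Module

noncomputable section

namespace ConeMorse

variable (A : ℤ → Type) [∀ i, AddCommGroup (A i)] [∀ i, Module ℝ (A i)]

/-- Transport along an equality of indices. -/
def lcast {m k : ℤ} (h : m = k) : A m →ₗ[ℝ] A k where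
  toFun x := h ▸ x
  map_add' x y := by subst h; rfl
  map_smul' c x := by subst h; rfl

variable (d : ∀ i, A i →ₗ[ℝ] A (i + 1))

/-- Cocycles in degree `i`. -/
def cocycles (i : ℤ) : Submodule ℝ (A i) := ker (d i)

/-- Coboundaries in degree `i`: the image of `d : A^{i-1} → A^i`. -/
def cobound (i : ℤ) : Submodule ℝ (A i) :=
  range ((lcast A (show i - 1 + 1 = i by ring)).comp (d (i - 1)))

/-- Cohomology in degree `i`: cocycles modulo coboundaries. -/
abbrev Hcoh (i : ℤ) :=
  cocycles A d i ⧸ Submodule.comap (cocycles A d i).subtype (cobound A d i)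

section OneComplex

variable (ℓ : ℤ) (φ : ∀ i, A i →ₗ[ℝ] A (i + ℓ))

/-- The cone differential `∂_C (a, b) = (∂ a + φ b, (−1)^{ℓ−1} ∂ b)` on
`Cone^i(φ) = A^i ⊕ A^{i−ℓ+1}`. -/
def coneD (i : ℤ) : (A i × A (i - ℓ + 1)) →ₗ[ℝ] (A (i + 1) × A (i + 1 - ℓ + 1)) :=
  LinearMap.prod
    ((d i).comp (LinearMap.fst ℝ (A i) (A (i - ℓ + 1))) +
      (lcast A (show i - ℓ + 1 + ℓ = i + 1 by ring)).comp
        ((φ (i - ℓ + 1)).comp (LinearMap.snd ℝ (A i) (A (i - ℓ + 1)))))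
    (((-1 : ℝ) ^ (ℓ - 1)) •
      ((lcast A (show i - ℓ + 1 + 1 = i + 1 - ℓ + 1 by ring)).comp
        ((d (i - ℓ + 1)).comp (LinearMap.snd ℝ (A i) (A (i - ℓ + 1))))))

variable [∀ i, FiniteDimensional ℝ (A i)]

/-- `m_k`: the dimension of the cochain group in degree `k`. -/
def mnum (k : ℤ) : ℕ := finrank ℝ (A k)

/-- `b_k`: the dimension of the cohomology in degree `k`. -/
def bnum (k : ℤ) : ℕ := finrank ℝ (Hcoh A d k)

/-- `v_k`: the rank of `φ : A^k → A^{k+ℓ}`. -/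
def vnum (k : ℤ) : ℕ := finrank ℝ (range (φ k))

/-- `r_k`: the rank of the induced map `[φ] : H^k → H^{k+ℓ}`, computed as the dimension of
`φ(Z^k)/(φ(Z^k) ∩ B^{k+ℓ})`. -/
def rnum (k : ℤ) : ℕ :=
  finrank ℝ ((Submodule.map (φ k) (cocycles A d k)) ⧸
    Submodule.comap (Submodule.map (φ k) (cocycles A d k)).subtype (cobound A d (k + ℓ)))

/-- `b^φ_k`: the dimension of the cone cohomology in degree `k`. -/
def bphi (k : ℤ) : ℕ :=
  finrank ℝ (Hcoh (fun i => A i × A (i - ℓ + 1)) (coneD A d ℓ φ) k)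

end OneComplex

end ConeMorse

open ConeMorse

/-!
Call `e_i = rank ∂_C^i − v_{i−ℓ+1}` the rank excess of the cone differential. It is nonnegative,
because restricting `∂_C` to the summand `C^{i−ℓ+1}` and projecting to `C^{i+1}` gives `φ`.
Rank–nullity for the cone complex says that the `k`-th term of the bound exceeds `b^φ_k` by
`e_k + e_{k−1}`. Alternating sums of such terms telescope, so the two sides of the inequality
differ by `e_j`, up to a boundary term `± e_{−1}` that vanishes because `Cone^{−1}(φ) = 0`.
-/

namespace ConeMorse

theorem sum_range_neg_one_pow_mul_add_pred {R : Type*} [CommRing R] (g : ℤ → R) (j : ℕ) :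
    ∑ k ∈ Finset.range (j + 1), (-1) ^ (j - k) * (g k + g (k - 1)) = g j + (-1) ^ j * g (-1) := by
  let F : ℕ → R := fun k ↦ (-1) ^ (j + 1 - k) * g (k - 1)
  have term_eq_sub (k : ℕ) (hk : k ∈ Finset.range (j + 1)) :
      (-1) ^ (j - k) * (g k + g (k - 1)) = F (k + 1) - F k := by
    have hkj : k ≤ j := Finset.mem_range_succ_iff.mp hk
    simp only [F, Nat.add_sub_add_right, Nat.succ_sub hkj, pow_succ, Nat.cast_succ,
      add_sub_cancel_right]
    ring
  rw [Finset.sum_congr rfl term_eq_sub, Finset.sum_range_sub]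
  simp [F, pow_succ]

section Cohomology

variable {A : ℤ → Type} [∀ i, AddCommGroup (A i)] [∀ i, Module ℝ (A i)]

theorem lcast_lcast {m k p : ℤ} (h : m = k) (h' : k = p) (x : A m) :
    lcast A h' (lcast A h x) = lcast A (h.trans h') x := by
  subst h h'
  rfl

theorem map_lcast {t : ℤ} (f : ∀ i, A i →ₗ[ℝ] A (i + t)) {m k : ℤ} (h : m = k) (x : A m) :
    f k (lcast A h x) = lcast A (congrArg (· + t) h) (f m x) := by
  subst h
  rfl

theorem finrank_range_lcast_comp {M : Type*} [AddCommGroup M] [Module ℝ M] {m k : ℤ} (h : m = k)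
    (f : M →ₗ[ℝ] A m) : finrank ℝ (range ((lcast A h).comp f)) = finrank ℝ (range f) := by
  subst h
  rfl

variable {d : ∀ i, A i →ₗ[ℝ] A (i + 1)}

theorem cobound_le_cocycles (hd : ∀ i, (d (i + 1)).comp (d i) = 0) (i : ℤ) :
    cobound A d i ≤ cocycles A d i := by
  rintro _ ⟨x, rfl⟩
  have hdd : d (i - 1 + 1) (d (i - 1) x) = 0 := LinearMap.congr_fun (hd (i - 1)) x
  rw [cocycles, mem_ker, comp_apply, map_lcast d, hdd, map_zero]

theorem finrank_Hcoh_add_finrank_cobound (hd : ∀ i, (d (i + 1)).comp (d i) = 0) (i : ℤ)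
    [FiniteDimensional ℝ (A i)] :
    finrank ℝ (Hcoh A d i) + finrank ℝ (cobound A d i) = finrank ℝ (cocycles A d i) := by
  rw [← (Submodule.comapSubtypeEquivOfLe (cobound_le_cocycles hd i)).finrank_eq]
  exact Submodule.finrank_quotient_add_finrank _

theorem finrank_Hcoh_add_finrank_range (hd : ∀ i, (d (i + 1)).comp (d i) = 0) (i : ℤ)
    [FiniteDimensional ℝ (A i)] :
    finrank ℝ (Hcoh A d i) + finrank ℝ (range (d i)) + finrank ℝ (range (d (i - 1))) =
      finrank ℝ (A i) := by
  have rank_nullity : finrank ℝ (range (d i)) + finrank ℝ (cocycles A d i) = finrank ℝ (A i) :=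
    finrank_range_add_finrank_ker (d i)
  have finrank_cobound : finrank ℝ (cobound A d i) = finrank ℝ (range (d (i - 1))) :=
    finrank_range_lcast_comp _ _
  have := finrank_Hcoh_add_finrank_cobound hd i
  omega

end Cohomology

section Cone

variable {C : ℤ → Type} [∀ i, AddCommGroup (C i)] [∀ i, Module ℝ (C i)]
  {d : ∀ i, C i →ₗ[ℝ] C (i + 1)} {ℓ : ℤ} {φ : ∀ i, C i →ₗ[ℝ] C (i + ℓ)}

theorem coneD_apply (i : ℤ) (a : C i) (b : C (i - ℓ + 1)) :
    coneD C d ℓ φ i (a, b) =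
      (d i a + lcast C (by ring) (φ (i - ℓ + 1) b),
        (-1 : ℝ) ^ (ℓ - 1) • lcast C (by ring) (d (i - ℓ + 1) b)) :=
  rfl

theorem coneD_comp_coneD (hd : ∀ i, (d (i + 1)).comp (d i) = 0)
    (hφ : ∀ i, (d (i + ℓ)).comp (φ i) =
      ((-1 : ℝ) ^ ℓ) • (lcast C (show i + 1 + ℓ = i + ℓ + 1 by ring)).comp
        ((φ (i + 1)).comp (d i))) (i : ℤ) :
    (coneD C d ℓ φ (i + 1)).comp (coneD C d ℓ φ i) = 0 := by
  have hdd (k : ℤ) (x : C k) : d (k + 1) (d k x) = 0 := LinearMap.congr_fun (hd k) x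
  have hdφ (k : ℤ) (x : C k) :
      d (k + ℓ) (φ k x) = (-1 : ℝ) ^ ℓ • lcast C (by ring) (φ (k + 1) (d k x)) :=
    LinearMap.congr_fun (hφ k) x
  have sign_add_sign : (-1 : ℝ) ^ ℓ + (-1 : ℝ) ^ (ℓ - 1) = 0 := by
    rw [zpow_sub_one₀ (by norm_num)]
    norm_num
  refine LinearMap.ext fun ⟨a, b⟩ ↦ ?_
  rw [comp_apply, coneD_apply, coneD_apply]
  refine Prod.ext ?_ ?_
  · simp only [map_add, map_smul, map_lcast d, map_lcast φ, hdd, hdφ, lcast_lcast, zero_add,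
      ← add_smul, sign_add_sign, zero_smul, LinearMap.zero_apply, Prod.fst_zero]
  · simp only [map_smul, map_lcast d, hdd, map_zero, smul_zero, LinearMap.zero_apply,
      Prod.snd_zero]

variable [∀ i, FiniteDimensional ℝ (C i)]

theorem vnum_le_finrank_range_coneD (i : ℤ) :
    vnum C ℓ φ (i - ℓ + 1) ≤ finrank ℝ (range (coneD C d ℓ φ i)) := by
  have fst_coneD_inr : (fst ℝ _ _).comp ((coneD C d ℓ φ i).comp (inr ℝ _ _)) =
      (lcast C (by ring)).comp (φ (i - ℓ + 1)) := by
    ext b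
    simp [coneD_apply]
  calc vnum C ℓ φ (i - ℓ + 1)
      = finrank ℝ (range ((fst ℝ _ _).comp ((coneD C d ℓ φ i).comp (inr ℝ _ _)))) := by
        rw [fst_coneD_inr, finrank_range_lcast_comp, vnum]
    _ ≤ finrank ℝ (range ((coneD C d ℓ φ i).comp (inr ℝ _ _))) := by
        rw [range_comp]
        exact Submodule.finrank_map_le _ _
    _ ≤ finrank ℝ (range (coneD C d ℓ φ i)) :=
        Submodule.finrank_mono (range_comp_le_range _ _)

variable (C d ℓ φ) in
/-- The excess `rank ∂_C^i − v_{i−ℓ+1}` of the rank of the cone differential in degree `i` over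
the rank of its component `φ`. It is an integer, so that the subtraction is not truncated. -/
def rankExcess (i : ℤ) : ℤ :=
  finrank ℝ (range (coneD C d ℓ φ i)) - vnum C ℓ φ (i - ℓ + 1)

theorem rankExcess_nonneg (i : ℤ) : 0 ≤ rankExcess C d ℓ φ i :=
  sub_nonneg.mpr (Nat.cast_le.mpr (vnum_le_finrank_range_coneD i))

theorem rankExcess_eq_zero_of_subsingleton {i : ℤ} (hi : Subsingleton (C i))
    (hi' : Subsingleton (C (i - ℓ + 1))) : rankExcess C d ℓ φ i = 0 := by
  have rank_le : finrank ℝ (range (coneD C d ℓ φ i)) ≤ finrank ℝ (C i × C (i - ℓ + 1)) :=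
    finrank_range_le _
  have finrank_cone : finrank ℝ (C i × C (i - ℓ + 1)) = 0 := finrank_zero_of_subsingleton
  have := vnum_le_finrank_range_coneD (d := d) (φ := φ) i
  rw [rankExcess]
  omega

theorem bphi_add_rankExcess_add_rankExcess_pred
    (hcone : ∀ i, (coneD C d ℓ φ (i + 1)).comp (coneD C d ℓ φ i) = 0) (k : ℤ) :
    bphi C d ℓ φ k + (rankExcess C d ℓ φ k + rankExcess C d ℓ φ (k - 1)) =
      (mnum C k : ℤ) - vnum C ℓ φ (k - ℓ) + mnum C (k - ℓ + 1) - vnum C ℓ φ (k - ℓ + 1) := by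
  have finrank_cone := finrank_Hcoh_add_finrank_range hcone k
  have vnum_pred : vnum C ℓ φ (k - 1 - ℓ + 1) = vnum C ℓ φ (k - ℓ) :=
    congrArg (vnum C ℓ φ) (by ring)
  rw [finrank_prod] at finrank_cone
  rw [rankExcess, rankExcess, vnum_pred, bphi, mnum, mnum]
  omega

theorem sum_bphi_add_rankExcess
    (hcone : ∀ i, (coneD C d ℓ φ (i + 1)).comp (coneD C d ℓ φ i) = 0) (j : ℕ) :
    ∑ k ∈ Finset.range (j + 1), (-1 : ℤ) ^ (j - k) * (bphi C d ℓ φ (k : ℤ) : ℤ) +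
        (rankExcess C d ℓ φ j + (-1) ^ j * rankExcess C d ℓ φ (-1)) =
      ∑ k ∈ Finset.range (j + 1), (-1 : ℤ) ^ (j - k) *
        ((mnum C (k : ℤ) : ℤ) - vnum C ℓ φ ((k : ℤ) - ℓ) +
          mnum C ((k : ℤ) - ℓ + 1) - vnum C ℓ φ ((k : ℤ) - ℓ + 1)) := by
  simp only [← bphi_add_rankExcess_add_rankExcess_pred hcone, mul_add (_ ^ _) (bphi _ _ _ _ _ : ℤ),
    Finset.sum_add_distrib, sum_range_neg_one_pow_mul_add_pred]

end Cone

end ConeMorse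

theorem strong_cone_morse_inequality_general
    (ℓ : ℤ) (C : ℤ → Type) [∀ i, AddCommGroup (C i)] [∀ i, Module ℝ (C i)]
    [∀ i, FiniteDimensional ℝ (C i)]
    (hC : Subsingleton (C (-1))) (hCℓ : Subsingleton (C (-ℓ)))
    (d : ∀ i, C i →ₗ[ℝ] C (i + 1))
    (hd : ∀ i, (d (i + 1)).comp (d i) = 0)
    (φ : ∀ i, C i →ₗ[ℝ] C (i + ℓ))
    (hφ : ∀ i, (d (i + ℓ)).comp (φ i) =
      ((-1 : ℝ) ^ ℓ) • (lcast C (show i + 1 + ℓ = i + ℓ + 1 by ring)).comp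
        ((φ (i + 1)).comp (d i)))
    (j : ℕ) :
    ∑ k ∈ Finset.range (j + 1), (-1 : ℤ) ^ (j - k) * (bphi C d ℓ φ (k : ℤ) : ℤ) ≤
      ∑ k ∈ Finset.range (j + 1), (-1 : ℤ) ^ (j - k) *
        ((mnum C (k : ℤ) : ℤ) - vnum C ℓ φ ((k : ℤ) - ℓ) +
          mnum C ((k : ℤ) - ℓ + 1) - vnum C ℓ φ ((k : ℤ) - ℓ + 1)) := by
  have degree_eq : -1 - ℓ + 1 = -ℓ := by ring
  have boundary_term : rankExcess C d ℓ φ (-1) = 0 :=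
    rankExcess_eq_zero_of_subsingleton hC (by rwa [degree_eq])
  rw [← sum_bphi_add_rankExcess (coneD_comp_coneD hd hφ) j, boundary_term, mul_zero, add_zero]
  exact le_add_of_nonneg_right (rankExcess_nonneg _)

/-- the strong cone Morse inequalities
`Σ_{k=0}^{j} (−1)^{j−k} b^φ_k ≤ Σ_{k=0}^{j} (−1)^{j−k} (m_k − v_{k−ℓ} + m_{k−ℓ+1} − v_{k−ℓ+1})`
for every integer `j ≥ 0`. -/
theorem strong_cone_morse_inequality
    (n ℓ : ℤ) (hn : 0 ≤ n) (hℓ : 1 ≤ ℓ)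
    (C : ℤ → Type) [∀ i, AddCommGroup (C i)] [∀ i, Module ℝ (C i)]
    [∀ i, FiniteDimensional ℝ (C i)]
    (hC : ∀ i, i < 0 ∨ n < i → Subsingleton (C i))
    (d : ∀ i, C i →ₗ[ℝ] C (i + 1))
    (hd : ∀ i, (d (i + 1)).comp (d i) = 0)
    (φ : ∀ i, C i →ₗ[ℝ] C (i + ℓ))
    (hφ : ∀ i, (d (i + ℓ)).comp (φ i) =
      ((-1 : ℝ) ^ ℓ) • (lcast C (show i + 1 + ℓ = i + ℓ + 1 by ring)).comp
        ((φ (i + 1)).comp (d i))) :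
    ∀ j : ℕ,
      ∑ k ∈ Finset.range (j + 1), (-1 : ℤ) ^ (j - k) * (bphi C d ℓ φ (k : ℤ) : ℤ) ≤
        ∑ k ∈ Finset.range (j + 1), (-1 : ℤ) ^ (j - k) *
          ((mnum C (k : ℤ) : ℤ) - vnum C ℓ φ ((k : ℤ) - ℓ) +
            mnum C ((k : ℤ) - ℓ + 1) - vnum C ℓ φ ((k : ℤ) - ℓ + 1)) :=
  strong_cone_morse_inequality_general ℓ C (hC (-1) (.inl (by omega)))
    (hC (-ℓ) (.inl (by omega))) d hd φ hφ
end
end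

section
/- Suppose m_k = b_k for every k (the algebraic model of a perfect Morse function). Then the strong cone Morse inequalities become equalities: for every integer j ≥ 0, Σ_{k=0}^{j} (−1)^{j−k} b^φ_k = Σ_{k=0}^{j} (−1)^{j−k} (m_k − v_{k−ℓ} + m_{k−ℓ+1} − v_{k−ℓ+1}). -/
open LinearMap Module

noncomputable section

open ConeMorse

/-!
Since `H^k` is a subquotient of `C^k`, perfection forces `∂ = 0`. The cone differential is then
`(a, b) ↦ (φ b, 0)`, whose rank in degree `k` is `v_{k-ℓ+1}`, so rank-nullity computes `b^φ_k` in
each degree separately; the alternating sums agree term by term.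
-/

namespace ConeMorse

section LinearAlgebra

theorem finrank_range_comp_of_injective {R U V W : Type*} [Semiring R]
    [AddCommMonoid U] [Module R U] [AddCommMonoid V] [Module R V] [AddCommMonoid W] [Module R W]
    {g : V →ₗ[R] W} (hg : Function.Injective g) (f : U →ₗ[R] V) :
    finrank R (range (g ∘ₗ f)) = finrank R (range f) := by
  rw [range_comp]
  exact (Submodule.equivMapOfInjective g hg (range f)).finrank_eq.symm

theorem finrank_ker_quotient_range_add {K U V W : Type*} [DivisionRing K]
    [AddCommGroup U] [Module K U] [AddCommGroup V] [Module K V] [AddCommGroup W] [Module K W]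
    [FiniteDimensional K V] {f : U →ₗ[K] V} {g : V →ₗ[K] W} (hgf : g ∘ₗ f = 0) :
    finrank K (ker g ⧸ (range f).comap (ker g).subtype) + finrank K (range f)
      + finrank K (range g) = finrank K V := by
  have hle : range f ≤ ker g := range_le_ker_iff.2 hgf
  rw [← (Submodule.comapSubtypeEquivOfLe hle).finrank_eq, Submodule.finrank_quotient_add_finrank,
    add_comm, finrank_range_add_finrank_ker]

end LinearAlgebra

variable {A : ℤ → Type} [∀ i, AddCommGroup (A i)] [∀ i, Module ℝ (A i)]

theorem lcast_injective {m k : ℤ} (h : m = k) : Function.Injective (lcast A h) := by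
  subst h
  exact Function.injective_id

theorem comp_lcast_comp_eq_zero {d : ∀ i, A i →ₗ[ℝ] A (i + 1)}
    (hd : ∀ i, d (i + 1) ∘ₗ d i = 0) {i j : ℤ} (h : i + 1 = j) :
    d j ∘ₗ lcast A h ∘ₗ d i = 0 := by
  subst h
  exact hd i

theorem finrank_Hcoh_add [∀ i, FiniteDimensional ℝ (A i)] {d : ∀ i, A i →ₗ[ℝ] A (i + 1)}
    (hd : ∀ i, d (i + 1) ∘ₗ d i = 0) (k : ℤ) :
    finrank ℝ (Hcoh A d k) + finrank ℝ (range (d (k - 1))) + finrank ℝ (range (d k))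
      = finrank ℝ (A k) := by
  have hk : k - 1 + 1 = k := sub_add_cancel k 1
  rw [← finrank_range_comp_of_injective (lcast_injective hk) (d (k - 1))]
  exact finrank_ker_quotient_range_add (comp_lcast_comp_eq_zero hd hk)

theorem eq_zero_of_mnum_eq_bnum [∀ i, FiniteDimensional ℝ (A i)]
    {d : ∀ i, A i →ₗ[ℝ] A (i + 1)} {k : ℤ} (h : mnum A k = bnum A d k) : d k = 0 := by
  have finrank_le_cocycles : finrank ℝ (A k) ≤ finrank ℝ (cocycles A d k) :=
    h.trans_le (Submodule.finrank_quotient_le _)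
  exact ker_eq_top.1 <| Submodule.eq_top_of_finrank_eq <|
    (Submodule.finrank_le _).antisymm finrank_le_cocycles

section ZeroDifferential

variable (ℓ : ℤ) (φ : ∀ i, A i →ₗ[ℝ] A (i + ℓ))

theorem coneD_zero (i : ℤ) :
    coneD A 0 ℓ φ i = (inl ℝ (A (i + 1)) (A (i + 1 - ℓ + 1)) ∘ₗ
      lcast A (show i - ℓ + 1 + ℓ = i + 1 by ring)) ∘ₗ
        φ (i - ℓ + 1) ∘ₗ snd ℝ (A i) (A (i - ℓ + 1)) := by
  ext x <;> simp [coneD]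

theorem coneD_zero_comp_coneD_zero (i : ℤ) :
    coneD A 0 ℓ φ (i + 1) ∘ₗ coneD A 0 ℓ φ i = 0 := by
  ext x <;> simp [coneD_zero]

theorem finrank_range_coneD_zero [∀ i, FiniteDimensional ℝ (A i)] (i : ℤ) :
    finrank ℝ (range (coneD A 0 ℓ φ i)) = vnum A ℓ φ (i - ℓ + 1) := by
  have inl_lcast_injective : Function.Injective (inl ℝ (A (i + 1)) (A (i + 1 - ℓ + 1)) ∘ₗ
      lcast A (show i - ℓ + 1 + ℓ = i + 1 by ring)) :=
    inl_injective.comp (lcast_injective _)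
  rw [coneD_zero, finrank_range_comp_of_injective inl_lcast_injective,
    range_comp_of_range_eq_top _ (range_eq_top.2 snd_surjective), vnum]

theorem bphi_zero_add [∀ i, FiniteDimensional ℝ (A i)] (k : ℤ) :
    bphi A 0 ℓ φ k + vnum A ℓ φ (k - ℓ) + vnum A ℓ φ (k - ℓ + 1)
      = mnum A k + mnum A (k - ℓ + 1) := by
  have hk : k - ℓ = k - 1 - ℓ + 1 := by ring
  calc
    _ = bphi A 0 ℓ φ k + finrank ℝ (range (coneD A 0 ℓ φ (k - 1)))
          + finrank ℝ (range (coneD A 0 ℓ φ k)) := by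
      rw [finrank_range_coneD_zero, finrank_range_coneD_zero, ← hk]
    _ = finrank ℝ (A k × A (k - ℓ + 1)) :=
      finrank_Hcoh_add (A := fun i => A i × A (i - ℓ + 1)) (coneD_zero_comp_coneD_zero ℓ φ) k
    _ = mnum A k + mnum A (k - ℓ + 1) := finrank_prod

end ZeroDifferential

end ConeMorse

theorem perfect_morse_strong_equality_general
    (ℓ : ℤ) (C : ℤ → Type) [∀ i, AddCommGroup (C i)] [∀ i, Module ℝ (C i)]
    [∀ i, FiniteDimensional ℝ (C i)]
    (d : ∀ i, C i →ₗ[ℝ] C (i + 1)) (φ : ∀ i, C i →ₗ[ℝ] C (i + ℓ))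
    (hperf : ∀ k : ℤ, mnum C k = bnum C d k) (k : ℤ) :
    (bphi C d ℓ φ k : ℤ) =
      (mnum C k : ℤ) - vnum C ℓ φ (k - ℓ) + mnum C (k - ℓ + 1) - vnum C ℓ φ (k - ℓ + 1) := by
  obtain rfl : d = 0 := funext fun i => eq_zero_of_mnum_eq_bnum (hperf i)
  have hcone := bphi_zero_add ℓ φ k
  lia

/-- STATEMENT 12: if `m_k = b_k` for every `k` (a perfect Morse function), then the strong
cone Morse inequalities become equalities: for every integer `j ≥ 0`,
`Σ_{k=0}^{j} (−1)^{j−k} b^φ_k = Σ_{k=0}^{j} (−1)^{j−k} (m_k − v_{k−ℓ} + m_{k−ℓ+1} − v_{k−ℓ+1})`. -/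
theorem perfect_morse_strong_equality
    (n ℓ : ℤ) (hn : 0 ≤ n) (hℓ : 1 ≤ ℓ)
    (C : ℤ → Type) [∀ i, AddCommGroup (C i)] [∀ i, Module ℝ (C i)]
    [∀ i, FiniteDimensional ℝ (C i)]
    (hC : ∀ i, i < 0 ∨ n < i → Subsingleton (C i))
    (d : ∀ i, C i →ₗ[ℝ] C (i + 1))
    (hd : ∀ i, (d (i + 1)).comp (d i) = 0)
    (φ : ∀ i, C i →ₗ[ℝ] C (i + ℓ))
    (hφ : ∀ i, (d (i + ℓ)).comp (φ i) =
      ((-1 : ℝ) ^ ℓ) • (lcast C (show i + 1 + ℓ = i + ℓ + 1 by ring)).comp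
        ((φ (i + 1)).comp (d i)))
    (hperf : ∀ k : ℤ, mnum C k = bnum C d k) :
    ∀ j : ℕ,
      ∑ k ∈ Finset.range (j + 1), (-1 : ℤ) ^ (j - k) * (bphi C d ℓ φ (k : ℤ) : ℤ) =
        ∑ k ∈ Finset.range (j + 1), (-1 : ℤ) ^ (j - k) *
          ((mnum C (k : ℤ) : ℤ) - vnum C ℓ φ ((k : ℤ) - ℓ) +
            mnum C ((k : ℤ) - ℓ + 1) - vnum C ℓ φ ((k : ℤ) - ℓ + 1)) :=
  fun _ => Finset.sum_congr rfl fun k _ =>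
    congrArg _ (perfect_morse_strong_equality_general ℓ C d φ hperf k)
end
end
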